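/- Let p be an odd prime, Δ an integer not divisible by p, set ε = 1 if the image of Δ in ℤ/pℤ is a square and ε = −1 otherwise, and let k be a natural number. Consider the quadratic form in n = 2k+1 variables B(x₀, x₁, …, x_{2k}) = Δ·x₀² + ∑_{i=1}^{k} x_{2i−1}·x_{2i}. Let t be a nonzero integer with p-adic valuation T, and for a natural number ℓ let X_ℓ = N_ℓ / p^{nℓ}, where N_ℓ is the number of v ∈ (ℤ/p^ℓℤ)^n with B(v) = t̄². Then for every real z with |z| < 1, setting w = z/p^{k+1} and u = z²/p^{2k+1}, the series ∑_{ℓ≥0} z^ℓ · X_ℓ converges with sum ((1 − w²)/((1 − z/p)(1 − u))) · (1 − ((u − ε·w)/(1 − ε·w)) · u^T). -/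

import Mathlib

/-!
Let `S` be the generating series, in `x = z / p ^ n`, of the numbers of solutions of `B(v) = a`
modulo `p ^ l`, and call a solution primitive if it is nonzero modulo `p`. As `B` is unimodular at
`p`, its derivative at a primitive vector is surjective, so by Hensel's lemma each primitive
solution modulo `p ^ l` has `p ^ (n - 1)` lifts: the primitive solutions contribute a geometric
series determined by the count over `𝔽_p`. An imprimitive solution is `p • s` with
`p ^ 2 * B(s) = a`, so it contributes a shifted copy of the series of `a / p ^ 2`. Hence passing
from `t` to `p * t` replaces `S` by `(1 - w ^ 2) / (1 - z / p) + u * S`, and iterating this from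
the case of a unit `t` gives the formula.
-/

open Matrix

section PrimitiveVectors

variable {ι R S : Type*} [Fintype ι] [CommRing R] [CommRing S]

/-- A primitive (unimodular) vector. Over a local ring this says that some coordinate is a unit;
over the zero ring every vector is primitive. -/
def IsPrimitiveVec (v : ι → R) : Prop := ∃ s, v ⬝ᵥ s = 1

theorem IsPrimitiveVec.of_isUnit_dotProduct {v s : ι → R} (h : IsUnit (v ⬝ᵥ s)) :
    IsPrimitiveVec v := by
  obtain ⟨c, hc⟩ := h.exists_right_inv
  exact ⟨c • s, by rw [dotProduct_smul, smul_eq_mul, mul_comm, hc]⟩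

theorem isPrimitiveVec_comp_iff {f : R →+* S} [IsLocalHom f] (hf : Function.Surjective f)
    {v : ι → R} : IsPrimitiveVec (f ∘ v) ↔ IsPrimitiveVec v := by
  constructor
  · rintro ⟨s, hs⟩
    obtain ⟨s, rfl⟩ := hf.comp_left s
    refine .of_isUnit_dotProduct (isUnit_of_map_unit f (v ⬝ᵥ s) ?_)
    rw [RingHom.map_dotProduct, hs]
    exact isUnit_one
  · rintro ⟨s, hs⟩
    exact ⟨f ∘ s, by rw [← RingHom.map_dotProduct, hs, map_one]⟩

theorem isPrimitiveVec_iff_ne_zero {F : Type*} [Field F] {v : ι → F} :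
    IsPrimitiveVec v ↔ v ≠ 0 := by
  classical
  constructor
  · rintro ⟨s, hs⟩ rfl
    simp at hs
  · intro hv
    obtain ⟨i, hi⟩ := Function.ne_iff.1 hv
    exact .of_isUnit_dotProduct (s := Pi.single i 1) (by simpa using hi)

theorem IsPrimitiveVec.vecMul [DecidableEq ι] {v : ι → R} (hv : IsPrimitiveVec v)
    {M : Matrix ι ι R} (hM : IsUnit M) : IsPrimitiveVec (v ᵥ* M) := by
  obtain ⟨s, hs⟩ := hv
  obtain ⟨N, hN⟩ := hM.exists_right_inv
  exact ⟨N *ᵥ s, by rw [← dotProduct_mulVec, mulVec_mulVec, hN, one_mulVec, hs]⟩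

end PrimitiveVectors

section Counting

theorem card_subtype_comp_of_surjective {G H : Type*} [AddGroup G] [AddGroup H] [Finite G]
    {f : G →+ H} (hf : Function.Surjective f) (P : H → Prop) :
    Nat.card {g // P (f g)} = Nat.card f.ker * Nat.card {h // P h} := by
  have := Finite.of_surjective f hf
  have := Fintype.ofFinite {h // P h}
  rw [← Nat.card_congr (Equiv.sigmaSubtypeFiberEquivSubtype f (q := P) fun _ ↦ Iff.rfl),
    Nat.card_sigma, Finset.sum_congr rfl fun h _ ↦
      Nat.card_congr (AddMonoidHom.fiberEquivKerOfSurjective hf h.1)]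
  rw [Finset.sum_const, smul_eq_mul, Finset.card_univ, ← Nat.card_eq_fintype_card, mul_comm]

theorem card_ker_mul_card_of_surjective {G H : Type*} [AddGroup G] [AddGroup H]
    {f : G →+ H} (hf : Function.Surjective f) : Nat.card f.ker * Nat.card H = Nat.card G := by
  rw [← f.ker.card_mul_index, AddSubgroup.index_ker, f.range_eq_top.2 hf, AddSubgroup.card_top]

variable {ι R S : Type*} [Fintype ι] [CommRing R] [CommRing S]

theorem IsPrimitiveVec.card_sum_smul_eq {g : ι → R} (hg : IsPrimitiveVec g)
    {M : Type*} [AddCommGroup M] [Module R M] [Finite M] (c : M) :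
    Nat.card {s : ι → M // ∑ i, g i • s i = c} * Nat.card M = Nat.card M ^ Fintype.card ι := by
  let L : (ι → M) →+ M :=
    { toFun s := ∑ i, g i • s i
      map_zero' := by simp
      map_add' s t := by simp [Finset.sum_add_distrib] }
  have hL : Function.Surjective L := by
    obtain ⟨t, ht⟩ := hg
    refine fun m ↦ ⟨fun i ↦ t i • m, ?_⟩
    change ∑ i, g i • t i • m = m
    simp only [smul_smul, ← Finset.sum_smul]
    exact (congrArg (· • m) ht).trans (one_smul R m)
  change Nat.card {s // L s = c} * Nat.card M = _
  rw [card_subtype_comp_of_surjective hL (· = c), Nat.card_unique (α := {m // m = c}), mul_one,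
    card_ker_mul_card_of_surjective hL, Nat.card_fun, Nat.card_eq_fintype_card (α := ι)]

theorem add_dotProduct_mulVec_add (A : Matrix ι ι R) (v s : ι → R) :
    (v + s) ⬝ᵥ A *ᵥ (v + s) = v ⬝ᵥ A *ᵥ v + v ᵥ* (A + Aᵀ) ⬝ᵥ s + s ⬝ᵥ A *ᵥ s := by
  have hswap : s ⬝ᵥ A *ᵥ v = v ᵥ* Aᵀ ⬝ᵥ s := by rw [vecMul_transpose, dotProduct_comm]
  rw [mulVec_add, dotProduct_add, add_dotProduct, add_dotProduct, hswap, vecMul_add,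
    add_dotProduct, dotProduct_mulVec v A s]
  ring

variable (f : R →+* S)

theorem map_dotProduct_mulVec (A : Matrix ι ι R) (v : ι → R) :
    f (v ⬝ᵥ A *ᵥ v) = (f ∘ v) ⬝ᵥ A.map f *ᵥ (f ∘ v) := by
  rw [RingHom.map_dotProduct]
  congr 1
  exact funext fun i ↦ RingHom.map_mulVec f A v i

variable {f}

theorem dotProduct_mulVec_add_of_ker (hker : ∀ x y, f x = 0 → f y = 0 → x * y = 0)
    (A : Matrix ι ι R) (v : ι → R) (s : ι → RingHom.ker f) :
    (v + fun i ↦ (s i : R)) ⬝ᵥ A *ᵥ (v + fun i ↦ (s i : R)) =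
      v ⬝ᵥ A *ᵥ v + ((∑ i, (v ᵥ* (A + Aᵀ)) i • s i : RingHom.ker f) : R) := by
  have hquad : (fun i ↦ (s i : R)) ⬝ᵥ A *ᵥ (fun i ↦ (s i : R)) = 0 := by
    refine Finset.sum_eq_zero fun i _ ↦ hker _ _ (s i).2 ?_
    change f (∑ j, A i j * (s j : R)) = 0
    simp only [map_sum, map_mul, fun j ↦ RingHom.mem_ker.1 (s j).2, mul_zero,
      Finset.sum_const_zero]
  rw [add_dotProduct_mulVec_add, hquad, add_zero]
  simp [dotProduct]

theorem card_lifts_of_isPrimitiveVec [Finite R] [DecidableEq ι]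
    (hker : ∀ x y, f x = 0 → f y = 0 → x * y = 0) {A : Matrix ι ι R} (hA : IsUnit (A + Aᵀ))
    {v : ι → R} (hv : IsPrimitiveVec v) {a : R} (hva : f (v ⬝ᵥ A *ᵥ v) = f a) :
    Nat.card {w : ι → R // w ⬝ᵥ A *ᵥ w = a ∧ f ∘ w = f ∘ v} * Nat.card (RingHom.ker f) =
      Nat.card (RingHom.ker f) ^ Fintype.card ι := by
  let c : RingHom.ker f := ⟨a - v ⬝ᵥ A *ᵥ v, by rw [RingHom.mem_ker, map_sub, hva, sub_self]⟩
  have hsol (s : ι → RingHom.ker f) :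
      (v + fun i ↦ (s i : R)) ⬝ᵥ A *ᵥ (v + fun i ↦ (s i : R)) = a ↔
        ∑ i, (v ᵥ* (A + Aᵀ)) i • s i = c := by
    rw [dotProduct_mulVec_add_of_ker hker, Subtype.ext_iff, ← eq_sub_iff_add_eq']
  have hred (s : ι → RingHom.ker f) : f ∘ (v + fun i ↦ (s i : R)) = f ∘ v :=
    funext fun i ↦ by simp [RingHom.mem_ker.1 (s i).2]
  rw [← (hv.vecMul hA).card_sum_smul_eq c]
  congr 1
  refine (Nat.card_congr (.ofBijective
    (fun s ↦ ⟨v + fun i ↦ (s.1 i : R), (hsol s.1).2 s.2, hred s.1⟩) ⟨?_, ?_⟩)).symm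
  · intro s s' h
    ext i
    simpa using congrFun (congrArg Subtype.val h) i
  · rintro ⟨w, hw, hwv⟩
    obtain ⟨s, rfl⟩ : ∃ s : ι → RingHom.ker f, w = v + fun i ↦ (s i : R) :=
      ⟨fun i ↦ ⟨w i - v i, RingHom.sub_mem_ker_iff f |>.2 (congrFun hwv i)⟩, by ext i; simp⟩
    exact ⟨⟨s, (hsol s).1 hw⟩, rfl⟩

theorem card_primitive_solutions_lift [Finite R] [DecidableEq ι] [IsLocalHom f]
    (hf : Function.Surjective f) (hker : ∀ x y, f x = 0 → f y = 0 → x * y = 0)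
    {A : Matrix ι ι R} (hA : IsUnit (A + Aᵀ)) (a : R) :
    Nat.card {v : ι → R // IsPrimitiveVec v ∧ v ⬝ᵥ A *ᵥ v = a} * Nat.card (RingHom.ker f) =
      Nat.card (RingHom.ker f) ^ Fintype.card ι *
        Nat.card {v : ι → S // IsPrimitiveVec v ∧ v ⬝ᵥ A.map f *ᵥ v = f a} := by
  have := Finite.of_surjective f hf
  let reduce (v : {v : ι → R // IsPrimitiveVec v ∧ v ⬝ᵥ A *ᵥ v = a}) :
      {v : ι → S // IsPrimitiveVec v ∧ v ⬝ᵥ A.map f *ᵥ v = f a} :=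
    ⟨f ∘ v.1, (isPrimitiveVec_comp_iff hf).2 v.2.1, by
      rw [← map_dotProduct_mulVec, v.2.2]⟩
  have := Fintype.ofFinite {v : ι → S // IsPrimitiveVec v ∧ v ⬝ᵥ A.map f *ᵥ v = f a}
  rw [← Nat.card_congr (Equiv.sigmaFiberEquiv reduce), Nat.card_sigma, Finset.sum_mul,
    Finset.sum_congr rfl (g := fun _ ↦ Nat.card (RingHom.ker f) ^ Fintype.card ι)]
  · rw [Finset.sum_const, smul_eq_mul, Finset.card_univ, ← Nat.card_eq_fintype_card, mul_comm]
  · rintro ⟨v, hv, hva⟩ -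
    obtain ⟨v, rfl⟩ := hf.comp_left v
    rw [isPrimitiveVec_comp_iff hf] at hv
    rw [← map_dotProduct_mulVec] at hva
    rw [← card_lifts_of_isPrimitiveVec hker hA hv hva]
    congr 1
    refine Nat.card_congr
      { toFun w := ⟨w.1.1, w.1.2.2, congrArg Subtype.val w.2⟩
        invFun w := ⟨⟨w.1, ?_, w.2.1⟩, Subtype.ext w.2.2⟩
        left_inv _ := rfl
        right_inv _ := rfl }
    rw [← isPrimitiveVec_comp_iff hf, w.2.2, isPrimitiveVec_comp_iff hf]
    exact hv

end Counting

section PrimePowerModuli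

theorem natCast_mul_eq_zero_iff_castHom {d m n : ℕ} (hd : d ≠ 0) (hn : n = d * m) (h : m ∣ n)
    {x : ZMod n} : (d : ZMod n) * x = 0 ↔ ZMod.castHom h (ZMod m) x = 0 := by
  obtain ⟨x, rfl⟩ := ZMod.intCast_surjective x
  rw [map_intCast, ZMod.intCast_zmod_eq_zero_iff_dvd, ← Int.cast_natCast, ← Int.cast_mul,
    ZMod.intCast_zmod_eq_zero_iff_dvd, hn, Nat.cast_mul]
  exact mul_dvd_mul_iff_left (by exact_mod_cast hd)

theorem castHom_eq_zero_iff_dvd {m n : ℕ} (h : m ∣ n) {x : ZMod n} :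
    ZMod.castHom h (ZMod m) x = 0 ↔ (m : ZMod n) ∣ x := by
  constructor
  · obtain ⟨x, rfl⟩ := ZMod.intCast_surjective x
    rw [map_intCast, ZMod.intCast_zmod_eq_zero_iff_dvd]
    rintro ⟨y, rfl⟩
    exact ⟨y, by push_cast; rfl⟩
  · rintro ⟨y, rfl⟩
    rw [map_mul, map_natCast, ZMod.natCast_self, zero_mul]

theorem isLocalHom_castHom {m n j : ℕ} (h : m ∣ n) (hn : n ∣ m ^ j) :
    IsLocalHom (ZMod.castHom h (ZMod m)) where
  map_nonunit x hx := by
    obtain ⟨x, rfl⟩ := ZMod.intCast_surjective x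
    rw [map_intCast, ZMod.coe_int_isUnit_iff_isCoprime] at hx
    rw [ZMod.coe_int_isUnit_iff_isCoprime]
    exact hx.pow_left.of_isCoprime_of_dvd_left (by exact_mod_cast hn)

theorem mul_eq_zero_of_castHom_eq_zero {m n : ℕ} (h : m ∣ n) (hn : n ∣ m ^ 2) {x y : ZMod n}
    (hx : ZMod.castHom h (ZMod m) x = 0) (hy : ZMod.castHom h (ZMod m) y = 0) : x * y = 0 := by
  rw [castHom_eq_zero_iff_dvd] at hx hy
  have hsq : (m * m : ZMod n) = 0 := by
    rwa [← sq, ← Nat.cast_pow, ZMod.natCast_eq_zero_iff]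
  exact zero_dvd_iff.1 (hsq ▸ mul_dvd_mul hx hy)

theorem card_ker_castHom {d m n : ℕ} [NeZero m] (hn : n = d * m) (h : m ∣ n) :
    Nat.card (RingHom.ker (ZMod.castHom h (ZMod m))) = d := by
  have hcard := card_ker_mul_card_of_surjective
    (f := (ZMod.castHom h (ZMod m)).toAddMonoidHom) (ZMod.castHom_surjective h)
  rw [Nat.card_zmod, Nat.card_zmod] at hcard
  exact Nat.eq_of_mul_eq_mul_right (NeZero.pos m) (hcard.trans hn)

theorem isUnit_map_add_transpose {ι : Type*} [Fintype ι] [DecidableEq ι] {p : ℕ} [Fact p.Prime]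
    {A : Matrix ι ι ℤ} (hA : ¬ (p : ℤ) ∣ (A + Aᵀ).det) (l : ℕ) :
    IsUnit (A.map (Int.castRingHom (ZMod (p ^ l))) +
      (A.map (Int.castRingHom (ZMod (p ^ l))))ᵀ) := by
  rw [← Matrix.transpose_map, ← Matrix.map_add _ (map_add _), Matrix.isUnit_iff_isUnit_det,
    ← RingHom.mapMatrix_apply, ← RingHom.map_det, eq_intCast, ZMod.coe_int_isUnit_iff_isCoprime,
    Nat.cast_pow]
  have hp := (Nat.prime_iff_prime_int.1 (Fact.out : p.Prime)).irreducible
  exact (hp.coprime_iff_not_dvd.2 hA).pow_left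

theorem exists_eq_pow_padicValInt_mul {p : ℕ} (hp : p ≠ 1) {t : ℤ} (ht : t ≠ 0) :
    ∃ s : ℤ, t = p ^ padicValInt p t * s ∧ ¬ (p : ℤ) ∣ s := by
  rw [padicValInt.of_ne_one_ne_zero hp ht]
  have hfin : FiniteMultiplicity (p : ℤ) t :=
    Int.finiteMultiplicity_iff.2 ⟨by rwa [Int.natAbs_natCast], ht⟩
  exact hfin.exists_eq_pow_mul_and_not_dvd

end PrimePowerModuli

section SolutionCounts

variable {ι : Type*} [Fintype ι]

/-- The number of solutions of `v ⬝ᵥ A *ᵥ v = a` modulo `m`. -/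
noncomputable def solutionCount (A : Matrix ι ι ℤ) (a : ℤ) (m : ℕ) : ℕ :=
  Nat.card {v : ι → ZMod m // v ⬝ᵥ A.map (Int.castRingHom (ZMod m)) *ᵥ v = a}

/-- The number of primitive solutions of `v ⬝ᵥ A *ᵥ v = a` modulo `m`. -/
noncomputable def primitiveSolutionCount (A : Matrix ι ι ℤ) (a : ℤ) (m : ℕ) : ℕ :=
  Nat.card {v : ι → ZMod m //
    IsPrimitiveVec v ∧ v ⬝ᵥ A.map (Int.castRingHom (ZMod m)) *ᵥ v = a}

/-- The number of imprimitive solutions of `v ⬝ᵥ A *ᵥ v = a` modulo `m`. -/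
noncomputable def imprimitiveSolutionCount (A : Matrix ι ι ℤ) (a : ℤ) (m : ℕ) : ℕ :=
  Nat.card {v : ι → ZMod m //
    ¬ IsPrimitiveVec v ∧ v ⬝ᵥ A.map (Int.castRingHom (ZMod m)) *ᵥ v = a}

variable (A : Matrix ι ι ℤ) (a : ℤ)

theorem solutionCount_one : solutionCount A a 1 = 1 := by
  have : Subsingleton (ZMod 1) := inferInstanceAs (Subsingleton (Fin 1))
  exact Nat.card_eq_one_iff_unique.2 ⟨inferInstance, ⟨⟨0, Subsingleton.elim _ _⟩⟩⟩

theorem solutionCount_eq_add (m : ℕ) [NeZero m] :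
    solutionCount A a m = primitiveSolutionCount A a m + imprimitiveSolutionCount A a m := by
  classical
  rw [solutionCount, primitiveSolutionCount, imprimitiveSolutionCount, ← Nat.card_sum]
  refine Nat.card_congr ((Equiv.sumCompl fun v ↦ IsPrimitiveVec v.1).symm.trans
    (.sumCongr ?_ ?_))
  · exact (Equiv.subtypeSubtypeEquivSubtypeInter _ IsPrimitiveVec).trans
      (.subtypeEquivRight fun _ ↦ and_comm)
  · exact (Equiv.subtypeSubtypeEquivSubtypeInter _ fun v ↦ ¬ IsPrimitiveVec v).trans
      (.subtypeEquivRight fun _ ↦ and_comm)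

variable {a}

theorem imprimitiveSolutionCount_eq_zero {m : ℕ} (ha : IsUnit (a : ZMod m)) :
    imprimitiveSolutionCount A a m = 0 := by
  refine Nat.card_eq_zero.2 (.inl ⟨fun v ↦ v.2.1 ?_⟩)
  exact .of_isUnit_dotProduct (s := A.map (Int.castRingHom (ZMod m)) *ᵥ v.1) (by rwa [v.2.2])

theorem imprimitiveSolutionCount_prime {p : ℕ} [Fact p.Prime] (ha : (p : ℤ) ∣ a) :
    imprimitiveSolutionCount A a p = 1 := by
  have ha0 : (a : ZMod p) = 0 := (ZMod.intCast_zmod_eq_zero_iff_dvd a p).2 ha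
  refine Nat.card_eq_one_iff_unique.2 ⟨⟨fun v w ↦ Subtype.ext ?_⟩, ⟨⟨0, ?_⟩⟩⟩
  · exact (of_not_not (isPrimitiveVec_iff_ne_zero.not.1 v.2.1)).trans
      (of_not_not (isPrimitiveVec_iff_ne_zero.not.1 w.2.1)).symm
  · simp [isPrimitiveVec_iff_ne_zero, ha0]

theorem castHom_dotProduct_mulVec {m n : ℕ} (h : m ∣ n) (v : ι → ZMod n) :
    ZMod.castHom h (ZMod m) (v ⬝ᵥ A.map (Int.castRingHom (ZMod n)) *ᵥ v) =
      (ZMod.castHom h (ZMod m) ∘ v) ⬝ᵥ A.map (Int.castRingHom (ZMod m)) *ᵥ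
        (ZMod.castHom h (ZMod m) ∘ v) := by
  rw [map_dotProduct_mulVec, Matrix.map_map, ← RingHom.coe_comp,
    RingHom.ext_int ((ZMod.castHom h (ZMod m)).comp _) (Int.castRingHom (ZMod m))]

theorem card_castHom_comp {d m n : ℕ} [NeZero m] [NeZero n] (hn : n = d * m) (h : m ∣ n)
    (P : (ι → ZMod m) → Prop) :
    Nat.card {v : ι → ZMod n // P (ZMod.castHom h (ZMod m) ∘ v)} =
      d ^ Fintype.card ι * Nat.card {v // P v} := by
  let f : (ι → ZMod n) →+ (ι → ZMod m) := (ZMod.castHom h (ZMod m)).toAddMonoidHom.compLeft ι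
  have hf : Function.Surjective f := (ZMod.castHom_surjective h).comp_left
  have hker : Nat.card f.ker = d ^ Fintype.card ι := by
    have hcard := card_ker_mul_card_of_surjective hf
    simp only [Nat.card_fun, Nat.card_zmod, Nat.card_eq_fintype_card (α := ι), hn, mul_pow]
      at hcard
    exact Nat.eq_of_mul_eq_mul_right (pow_pos (NeZero.pos m) _) hcard
  rw [← hker]
  exact card_subtype_comp_of_surjective hf P

theorem card_smul_subtype {d m n : ℕ} [NeZero d] [NeZero m] [NeZero n] (hn : n = d * m)
    (P : (ι → ZMod n) → Prop) :
    Nat.card {s // P ((d : ZMod n) • s)} =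
      d ^ Fintype.card ι * Nat.card {v // (∃ s, (d : ZMod n) • s = v) ∧ P v} := by
  let f := DistribSMul.toAddMonoidHom (ι → ZMod n) (d : ZMod n)
  have h : m ∣ n := hn ▸ dvd_mul_left m d
  have hker : Nat.card f.ker = d ^ Fintype.card ι := by
    rw [← mul_one (d ^ _), ← Nat.card_unique (α := {v : ι → ZMod m // v = 0}),
      ← card_castHom_comp hn h]
    refine Nat.card_congr (.subtypeEquivRight fun v ↦ ?_)
    simp only [f, AddMonoidHom.mem_ker, DistribSMul.toAddMonoidHom_apply, funext_iff,
      Pi.smul_apply, smul_eq_mul, Pi.zero_apply, Function.comp_apply,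
      natCast_mul_eq_zero_iff_castHom (NeZero.ne d) hn h]
  rw [← hker, ← f.ker_rangeRestrict, ← Nat.card_congr (Equiv.subtypeSubtypeEquivSubtypeInter _ P)]
  exact card_subtype_comp_of_surjective f.rangeRestrict_surjective fun v ↦ P v

theorem card_multiple_solutions {d m n : ℕ} [NeZero d] [NeZero m] [NeZero n] (hn : n = d ^ 2 * m)
    (b : ℤ) :
    Nat.card {v : ι → ZMod n // (∃ s, (d : ZMod n) • s = v) ∧
      v ⬝ᵥ A.map (Int.castRingHom (ZMod n)) *ᵥ v = (d ^ 2 * b : ℤ)} =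
    d ^ Fintype.card ι * solutionCount A b m := by
  have h : m ∣ n := hn ▸ dvd_mul_left _ _
  have hd : 0 < d ^ Fintype.card ι := pow_pos (NeZero.pos d) _
  have hscale (s : ι → ZMod n) :
      ((d : ZMod n) • s) ⬝ᵥ A.map (Int.castRingHom (ZMod n)) *ᵥ ((d : ZMod n) • s) =
          (d ^ 2 * b : ℤ) ↔
        (ZMod.castHom h (ZMod m) ∘ s) ⬝ᵥ A.map (Int.castRingHom (ZMod m)) *ᵥ
          (ZMod.castHom h (ZMod m) ∘ s) = b := by
    rw [← castHom_dotProduct_mulVec, ← map_intCast (ZMod.castHom h (ZMod m)), ← sub_eq_zero,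
      ← sub_eq_zero (b := ZMod.castHom _ _ _), ← map_sub,
      ← natCast_mul_eq_zero_iff_castHom (pow_ne_zero 2 (NeZero.ne d)) hn h, mulVec_smul,
      smul_dotProduct, dotProduct_smul, smul_eq_mul, smul_eq_mul]
    push_cast
    ring_nf
  refine Nat.eq_of_mul_eq_mul_left hd ?_
  rw [← card_smul_subtype (m := d * m) (by rw [hn]; ring), ← mul_assoc, ← pow_add, ← two_mul,
    pow_mul, solutionCount, ← card_castHom_comp hn h]
  exact Nat.card_congr (.subtypeEquivRight hscale)

theorem isPrimitiveVec_zmod_iff {p n j : ℕ} [Fact p.Prime] (hp : p ∣ n) (hn : n ∣ p ^ j)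
    {v : ι → ZMod n} : IsPrimitiveVec v ↔ ¬ ∃ s, (p : ZMod n) • s = v := by
  have := isLocalHom_castHom hp hn
  rw [← isPrimitiveVec_comp_iff (ZMod.castHom_surjective hp), isPrimitiveVec_iff_ne_zero,
    not_iff_not]
  simp only [funext_iff, Function.comp_apply, Pi.zero_apply, castHom_eq_zero_iff_dvd,
    Pi.smul_apply, smul_eq_mul, dvd_def, eq_comm (a := v _)]
  exact Classical.skolem

theorem imprimitiveSolutionCount_sq_mul {p : ℕ} [Fact p.Prime] (b : ℤ) (l : ℕ) :
    imprimitiveSolutionCount A (p ^ 2 * b) (p ^ (l + 2)) =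
      p ^ Fintype.card ι * solutionCount A b (p ^ l) := by
  rw [← card_multiple_solutions A (n := p ^ (l + 2)) (by ring) b]
  refine Nat.card_congr (.subtypeEquivRight fun v ↦ ?_)
  rw [isPrimitiveVec_zmod_iff (dvd_pow_self p (by lia)) dvd_rfl, not_not]

theorem prime_mul_primitiveSolutionCount_pow {p : ℕ} [Fact p.Prime]
    {A : Matrix ι ι ℤ} [DecidableEq ι] (hA : ¬ (p : ℤ) ∣ (A + Aᵀ).det) (a : ℤ) (l : ℕ) :
    p * primitiveSolutionCount A a (p ^ (l + 2)) =
      p ^ Fintype.card ι * primitiveSolutionCount A a (p ^ (l + 1)) := by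
  have h : p ^ (l + 1) ∣ p ^ (l + 2) := pow_dvd_pow p (by lia)
  have hsq : p ^ (l + 2) ∣ (p ^ (l + 1)) ^ 2 := by rw [← pow_mul]; exact pow_dvd_pow p (by lia)
  have := isLocalHom_castHom h hsq
  have hlift := card_primitive_solutions_lift (ZMod.castHom_surjective h)
    (fun _ _ ↦ mul_eq_zero_of_castHom_eq_zero h hsq) (isUnit_map_add_transpose hA (l + 2)) a
  rw [card_ker_castHom (pow_succ' p (l + 1)) h, map_intCast, Matrix.map_map, ← RingHom.coe_comp,
    RingHom.ext_int ((ZMod.castHom h _).comp _) (Int.castRingHom (ZMod (p ^ (l + 1))))] at hlift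
  rw [mul_comm]
  exact hlift

end SolutionCounts

section GeneratingSeries

variable {ι 𝕜 : Type*} [Fintype ι] [DecidableEq ι] [NormedField 𝕜] [CharZero 𝕜]
  {p : ℕ} [Fact p.Prime] {A : Matrix ι ι ℤ} {x r : 𝕜}

theorem hasSum_primitiveSolutionCount (hA : ¬ (p : ℤ) ∣ (A + Aᵀ).det) (a : ℤ)
    (hr : p * r = p ^ Fintype.card ι * x) (hr1 : ‖r‖ < 1) :
    HasSum (fun l ↦ (primitiveSolutionCount A a (p ^ (l + 1)) : 𝕜) * x ^ (l + 1))
      (primitiveSolutionCount A a p * x / (1 - r)) := by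
  have hp0 : (p : 𝕜) ≠ 0 := Nat.cast_ne_zero.2 (NeZero.ne p)
  have hgeom (l : ℕ) : (primitiveSolutionCount A a (p ^ (l + 1)) : 𝕜) * x ^ (l + 1) =
      primitiveSolutionCount A a p * x * r ^ l := by
    induction l with
    | zero => simp
    | succ l ih =>
      have hlift : (p : 𝕜) * primitiveSolutionCount A a (p ^ (l + 2)) =
          p ^ Fintype.card ι * primitiveSolutionCount A a (p ^ (l + 1)) := by
        exact_mod_cast prime_mul_primitiveSolutionCount_pow hA a l
      refine mul_left_cancel₀ hp0 ?_
      linear_combination x ^ (l + 2) * hlift + p * r * ih -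
        primitiveSolutionCount A a (p ^ (l + 1)) * x ^ (l + 1) * hr
  simp only [hgeom, div_eq_mul_inv]
  exact (hasSum_geometric_of_norm_lt_one hr1).mul_left _

theorem hasSum_solutionCount_of_not_dvd (hA : ¬ (p : ℤ) ∣ (A + Aᵀ).det) {a : ℤ}
    (ha : ¬ (p : ℤ) ∣ a) (hr : p * r = p ^ Fintype.card ι * x) (hr1 : ‖r‖ < 1) :
    HasSum (fun l ↦ (solutionCount A a (p ^ l) : 𝕜) * x ^ l)
      (1 + solutionCount A a p * x / (1 - r)) := by
  have hprim (l : ℕ) :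
      solutionCount A a (p ^ (l + 1)) = primitiveSolutionCount A a (p ^ (l + 1)) := by
    have hp := (Nat.prime_iff_prime_int.1 (Fact.out : p.Prime)).irreducible
    rw [solutionCount_eq_add, imprimitiveSolutionCount_eq_zero, add_zero]
    rw [ZMod.coe_int_isUnit_iff_isCoprime, Nat.cast_pow]
    exact (hp.coprime_iff_not_dvd.2 ha).pow_left
  have hprim0 := hprim 0
  rw [zero_add, pow_one] at hprim0
  rw [← hasSum_nat_add_iff' 1]
  simpa [hprim, hprim0, solutionCount_one] using hasSum_primitiveSolutionCount hA a hr hr1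

theorem hasSum_solutionCount_sq_mul (hA : ¬ (p : ℤ) ∣ (A + Aᵀ).det) (b : ℤ) {S : 𝕜}
    (hr : p * r = p ^ Fintype.card ι * x) (hr1 : ‖r‖ < 1)
    (hS : HasSum (fun l ↦ (solutionCount A b (p ^ l) : 𝕜) * x ^ l) S) :
    HasSum (fun l ↦ (solutionCount A (p ^ 2 * b) (p ^ l) : 𝕜) * x ^ l)
      (1 + (x + p ^ Fintype.card ι * x ^ 2 * S +
        (solutionCount A (p ^ 2 * b) p - 1) * x / (1 - r))) := by
  have hdvd : (p : ℤ) ∣ p ^ 2 * b := (dvd_pow_self _ two_ne_zero).mul_right b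
  have himprim : HasSum
      (fun l ↦ (imprimitiveSolutionCount A (p ^ 2 * b) (p ^ (l + 1)) : 𝕜) * x ^ (l + 1))
      (x + p ^ Fintype.card ι * x ^ 2 * S) := by
    rw [← hasSum_nat_add_iff' 1, Finset.sum_range_one, zero_add, pow_one, pow_one,
      imprimitiveSolutionCount_prime A hdvd, Nat.cast_one, one_mul, add_sub_cancel_left]
    have hterm (l : ℕ) :
        (imprimitiveSolutionCount A (p ^ 2 * b) (p ^ (l + 1 + 1)) : 𝕜) * x ^ (l + 1 + 1) =
          p ^ Fintype.card ι * x ^ 2 * (solutionCount A b (p ^ l) * x ^ l) := by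
      rw [imprimitiveSolutionCount_sq_mul]
      push_cast
      ring
    simp only [hterm]
    exact hS.mul_left _
  have hprim := hasSum_primitiveSolutionCount hA (p ^ 2 * b) hr hr1
  have hone : (solutionCount A (p ^ 2 * b) p : 𝕜) - 1 =
      primitiveSolutionCount A (p ^ 2 * b) p := by
    rw [solutionCount_eq_add, imprimitiveSolutionCount_prime A hdvd, Nat.cast_add, Nat.cast_one,
      add_sub_cancel_right]
  rw [← hasSum_nat_add_iff' 1, Finset.sum_range_one, pow_zero, pow_zero, solutionCount_one,
    Nat.cast_one, mul_one, add_sub_cancel_left, hone, add_comm (x + _)]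
  simp only [solutionCount_eq_add A (p ^ 2 * b), Nat.cast_add, add_mul]
  exact hprim.add himprim

end GeneratingSeries

section SplitForm

variable (κ : Type*) [DecidableEq κ]

/-- A matrix of the quadratic form `Δ x² + ∑ i, y i * z i`, the orthogonal sum of a unary form and
hyperbolic planes indexed by `κ`; the coordinates are ordered as `(x, y, z)`. -/
def splitOddForm {R : Type*} [CommRing R] (Δ : R) : Matrix (Unit ⊕ κ ⊕ κ) (Unit ⊕ κ ⊕ κ) R :=
  fromBlocks (of fun _ _ ↦ Δ) 0 0 (fromBlocks 0 1 0 0)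

variable {κ}

theorem splitOddForm_map {R S : Type*} [CommRing R] [CommRing S] (f : R →+* S) (Δ : R) :
    (splitOddForm κ Δ).map f = splitOddForm κ (f Δ) := by
  simp only [splitOddForm, fromBlocks_map, Matrix.map_zero f (map_zero f),
    Matrix.map_one f (map_zero f) (map_one f)]
  rfl

variable [Fintype κ]

theorem dotProduct_splitOddForm_mulVec {R : Type*} [CommRing R] (Δ : R)
    (v : Unit ⊕ κ ⊕ κ → R) : v ⬝ᵥ splitOddForm κ Δ *ᵥ v =
      Δ * v (.inl ()) ^ 2 + ∑ i, v (.inr (.inl i)) * v (.inr (.inr i)) := by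
  simp only [dotProduct, mulVec, splitOddForm, Fintype.sum_sum_type, Finset.univ_unique,
    PUnit.default_eq_unit, Finset.sum_singleton, fromBlocks_apply₁₁, fromBlocks_apply₁₂,
    fromBlocks_apply₂₁, fromBlocks_apply₂₂, of_apply, Matrix.zero_apply, Matrix.one_apply,
    ite_mul, zero_mul, one_mul, mul_zero, Finset.sum_const_zero, Finset.sum_ite_eq,
    Finset.mem_univ, if_true, add_zero, zero_add]
  ring

theorem not_dvd_det_splitOddForm {p : ℕ} (hp : p.Prime) (hp2 : p ≠ 2) {Δ : ℤ}
    (hΔ : ¬ (p : ℤ) ∣ Δ) : ¬ (p : ℤ) ∣ (splitOddForm κ Δ + (splitOddForm κ Δ)ᵀ).det := by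
  have hswap : (fromBlocks 0 1 1 0 : Matrix (κ ⊕ κ) (κ ⊕ κ) ℤ).det ^ 2 = 1 := by
    rw [sq, ← det_mul, fromBlocks_multiply]
    simp
  have hdet : (splitOddForm κ Δ + (splitOddForm κ Δ)ᵀ).det =
      2 * Δ * (fromBlocks 0 1 1 0 : Matrix (κ ⊕ κ) (κ ⊕ κ) ℤ).det := by
    simp only [splitOddForm, fromBlocks_transpose, fromBlocks_add, transpose_zero, transpose_one,
      add_zero, zero_add, det_fromBlocks_zero₁₂, det_unique]
    simp [two_mul]
  have hpZ := Nat.prime_iff_prime_int.1 hp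
  rw [hdet, hpZ.dvd_mul, hpZ.dvd_mul, not_or, not_or]
  refine ⟨⟨?_, hΔ⟩, fun h ↦ hpZ.not_dvd_one (hswap ▸ dvd_pow h two_ne_zero)⟩
  exact fun h ↦ hp2 ((Nat.prime_dvd_prime_iff_eq hp Nat.prime_two).1 (by exact_mod_cast h))

end SplitForm

section FiniteField

variable {F κ : Type*} [Field F] [Fintype F] [DecidableEq F] [Fintype κ]

theorem card_mul_card_dotProduct_eq (y : κ → F) (c : F) :
    Fintype.card F * Nat.card {z // y ⬝ᵥ z = c} =
      if y = 0 then if c = 0 then Fintype.card F ^ (Fintype.card κ + 1) else 0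
      else Fintype.card F ^ Fintype.card κ := by
  classical
  split_ifs with hy hc
  · subst hy hc
    simp [pow_succ']
  · subst hy
    simp [Ne.symm hc]
  · rw [← Nat.card_eq_fintype_card (α := F), mul_comm]
    exact (isPrimitiveVec_iff_ne_zero.2 hy).card_sum_smul_eq c

theorem card_mul_card_hyperbolic_eq (c : F) :
    (Fintype.card F * Nat.card {v : (κ → F) × (κ → F) // v.1 ⬝ᵥ v.2 = c} : ℤ) =
      Fintype.card F ^ (2 * Fintype.card κ) - Fintype.card F ^ Fintype.card κ +
        if c = 0 then (Fintype.card F : ℤ) ^ (Fintype.card κ + 1) else 0 := by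
  classical
  have hfibre : Fintype.card F * Nat.card {v : (κ → F) × (κ → F) // v.1 ⬝ᵥ v.2 = c} =
      ∑ y : κ → F, Fintype.card F * Nat.card {z // y ⬝ᵥ z = c} := by
    rw [Nat.card_congr (Equiv.subtypeProdEquivSigmaSubtype fun y z ↦ y ⬝ᵥ z = c), Nat.card_sigma,
      Finset.mul_sum]
  have hcard : ((Finset.univ.erase (0 : κ → F)).card : ℤ) =
      (Fintype.card F : ℤ) ^ Fintype.card κ - 1 := by
    rw [Finset.cast_card_erase_of_mem (Finset.mem_univ 0), Finset.card_univ, Fintype.card_fun,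
      Nat.cast_pow]
  rw [← Nat.cast_mul, hfibre, Nat.cast_sum, ← Finset.add_sum_erase _ _ (Finset.mem_univ 0)]
  simp only [card_mul_card_dotProduct_eq]
  rw [if_pos trivial, Finset.sum_congr rfl fun y hy ↦ by rw [if_neg (Finset.ne_of_mem_erase hy)],
    Finset.sum_const, nsmul_eq_mul, hcard]
  push_cast
  ring

theorem card_mul_sq_eq (hF : ringChar F ≠ 2) {Δ : F} (hΔ : Δ ≠ 0) (a : F) :
    (Nat.card {x : F // Δ * x ^ 2 = a} : ℤ) = quadraticChar F (Δ * a) + 1 := by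
  rw [← quadraticChar_card_sqrts hF, Set.toFinset_card, ← Nat.card_eq_fintype_card]
  congr 1
  refine Nat.card_congr ((Equiv.mulLeft₀ Δ hΔ).subtypeEquiv fun x ↦ ?_)
  rw [Equiv.mulLeft₀_apply, Set.mem_ofPred_eq, mul_pow, sq Δ, mul_assoc, mul_right_inj' hΔ]

theorem quadraticChar_mul_sq {Δ s : F} (hΔ : Δ ≠ 0) (hs : s ≠ 0) [Decidable (IsSquare Δ)] :
    quadraticChar F (Δ * s ^ 2) = if IsSquare Δ then 1 else -1 := by
  rw [map_mul, quadraticChar_sq_one' hs, mul_one, quadraticChar_apply, quadraticCharFun,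
    if_neg hΔ]
  congr

theorem card_splitOddForm_eq [DecidableEq κ] (hF : ringChar F ≠ 2) {Δ : F} (hΔ : Δ ≠ 0) (a : F) :
    (Nat.card {v // v ⬝ᵥ splitOddForm κ Δ *ᵥ v = a} : ℤ) =
      Fintype.card F ^ (2 * Fintype.card κ) +
        Fintype.card F ^ Fintype.card κ * quadraticChar F (Δ * a) := by
  have hfibre : Nat.card {v // v ⬝ᵥ splitOddForm κ Δ *ᵥ v = a} =
      ∑ x : F, Nat.card {v : (κ → F) × (κ → F) // v.1 ⬝ᵥ v.2 = a - Δ * x ^ 2} := by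
    let e : (Unit ⊕ κ ⊕ κ → F) ≃ F × (κ → F) × (κ → F) :=
      (Equiv.sumArrowEquivProdArrow _ _ _).trans
        ((Equiv.funUnique Unit F).prodCongr (Equiv.sumArrowEquivProdArrow _ _ _))
    rw [← Nat.card_sigma, ← Nat.card_congr (Equiv.subtypeProdEquivSigmaSubtype
      fun (x : F) (v : (κ → F) × (κ → F)) ↦ v.1 ⬝ᵥ v.2 = a - Δ * x ^ 2)]
    refine Nat.card_congr (e.subtypeEquiv fun v ↦ ?_)
    rw [dotProduct_splitOddForm_mulVec, eq_sub_iff_add_eq']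
    rfl
  have hroots : ∑ x : F, (if a - Δ * x ^ 2 = 0 then (Fintype.card F : ℤ) ^ (Fintype.card κ + 1)
      else 0) = (quadraticChar F (Δ * a) + 1) * Fintype.card F ^ (Fintype.card κ + 1) := by
    rw [← card_mul_sq_eq hF hΔ, Finset.sum_ite, Finset.sum_const_zero, add_zero, Finset.sum_const,
      nsmul_eq_mul, Nat.card_eq_fintype_card, Fintype.card_subtype]
    simp only [sub_eq_zero, eq_comm (a := a)]
  have hq : (Fintype.card F : ℤ) ≠ 0 := Nat.cast_ne_zero.2 Fintype.card_ne_zero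
  refine mul_left_cancel₀ hq ?_
  rw [hfibre, Nat.cast_sum, Finset.mul_sum]
  simp only [card_mul_card_hyperbolic_eq]
  rw [Finset.sum_add_distrib, hroots, Finset.sum_const, Finset.card_univ, nsmul_eq_mul]
  ring

end FiniteField

section SplitFormSeries

variable {κ : Type*} [Fintype κ] [DecidableEq κ] {p : ℕ} [Fact p.Prime] {Δ : ℤ}

theorem solutionCount_splitOddForm_prime (hp2 : p ≠ 2) (hΔ : ¬ (p : ℤ) ∣ Δ) (a : ℤ) :
    (solutionCount (splitOddForm κ Δ) a p : ℤ) =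
      p ^ (2 * Fintype.card κ) + p ^ Fintype.card κ * quadraticChar (ZMod p) (Δ * a) := by
  have hp : ringChar (ZMod p) ≠ 2 := by rwa [ZMod.ringChar_zmod_n]
  rw [← ZMod.intCast_zmod_eq_zero_iff_dvd] at hΔ
  rw [solutionCount, splitOddForm_map, eq_intCast, card_splitOddForm_eq hp hΔ, ZMod.card]

variable {𝕜 : Type*} [NormedField 𝕜] [CharZero 𝕜] {b : ℤ} {ε x r w u : 𝕜}

theorem hasSum_solutionCount_splitOddForm_of_not_dvd (hp2 : p ≠ 2) (hΔ : ¬ (p : ℤ) ∣ Δ)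
    (hb : ¬ (p : ℤ) ∣ b) (hε : ε = (quadraticChar (ZMod p) (Δ * b) : ℤ))
    (hr : r = p ^ (2 * Fintype.card κ) * x) (hw : w = p ^ Fintype.card κ * x) (hr1 : ‖r‖ < 1) :
    HasSum (fun l ↦ (solutionCount (splitOddForm κ Δ) b (p ^ l) : 𝕜) * x ^ l)
      ((1 + ε * w) / (1 - r)) := by
  have hratio : p * r = p ^ Fintype.card (Unit ⊕ κ ⊕ κ) * x := by
    simp only [hr, Fintype.card_sum, Fintype.card_unit]
    ring
  have hr0 : 1 - r ≠ 0 := sub_ne_zero.2 fun h ↦ by simp [← h] at hr1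
  have hcount : (solutionCount (splitOddForm κ Δ) b p : 𝕜) * x = r + ε * w := by
    have hcount := congrArg (Int.cast (R := 𝕜))
      (solutionCount_splitOddForm_prime (κ := κ) hp2 hΔ b)
    push_cast at hcount
    rw [hcount, hr, hw, hε]
    ring
  convert hasSum_solutionCount_of_not_dvd (not_dvd_det_splitOddForm Fact.out hp2 hΔ) hb hratio hr1
    using 1
  rw [hcount]
  field_simp
  ring

theorem hasSum_solutionCount_splitOddForm_sq_mul (hp2 : p ≠ 2) (hΔ : ¬ (p : ℤ) ∣ Δ)
    (hr : r = p ^ (2 * Fintype.card κ) * x) (hw : w = p ^ Fintype.card κ * x)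
    (hu : u = p ^ (2 * Fintype.card κ + 1) * x ^ 2) (hr1 : ‖r‖ < 1) {S : 𝕜}
    (hS : HasSum (fun l ↦ (solutionCount (splitOddForm κ Δ) b (p ^ l) : 𝕜) * x ^ l) S) :
    HasSum (fun l ↦ (solutionCount (splitOddForm κ Δ) (p ^ 2 * b) (p ^ l) : 𝕜) * x ^ l)
      ((1 - w ^ 2) / (1 - r) + u * S) := by
  have hcard : Fintype.card (Unit ⊕ κ ⊕ κ) = 2 * Fintype.card κ + 1 := by
    simp only [Fintype.card_sum, Fintype.card_unit]
    ring
  have hratio : p * r = p ^ Fintype.card (Unit ⊕ κ ⊕ κ) * x := by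
    rw [hcard, hr]
    ring
  have hr0 : 1 - r ≠ 0 := sub_ne_zero.2 fun h ↦ by simp [← h] at hr1
  have hcount : (solutionCount (splitOddForm κ Δ) (p ^ 2 * b) p : 𝕜) * x = r := by
    have hcount := congrArg (Int.cast (R := 𝕜))
      (solutionCount_splitOddForm_prime (κ := κ) hp2 hΔ (p ^ 2 * b))
    have hzero : ((p ^ 2 * b : ℤ) : ZMod p) = 0 := by simp
    rw [hzero, mul_zero, quadraticChar_zero, mul_zero, add_zero] at hcount
    push_cast at hcount
    rw [hcount, hr]
  have hxr : x * r = w ^ 2 := by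
    rw [hr, hw]
    ring
  convert hasSum_solutionCount_sq_mul (not_dvd_det_splitOddForm Fact.out hp2 hΔ) b hratio hr1 hS
    using 1
  rw [hcard, ← hu, sub_mul, hcount]
  field_simp
  linear_combination hxr

theorem hasSum_solutionCount_splitOddForm (hp2 : p ≠ 2) (hΔ : ¬ (p : ℤ) ∣ Δ)
    (hb : ¬ (p : ℤ) ∣ b) (hε : ε = (quadraticChar (ZMod p) (Δ * b) : ℤ))
    (hr : r = p ^ (2 * Fintype.card κ) * x) (hw : w = p ^ Fintype.card κ * x)
    (hu : u = p ^ (2 * Fintype.card κ + 1) * x ^ 2) (hr1 : ‖r‖ < 1) (hu1 : u ≠ 1)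
    (hw1 : ε * w ≠ 1) (T : ℕ) :
    HasSum (fun l ↦ (solutionCount (splitOddForm κ Δ) (p ^ (2 * T) * b) (p ^ l) : 𝕜) * x ^ l)
      ((1 - w ^ 2) / ((1 - r) * (1 - u)) * (1 - (u - ε * w) / (1 - ε * w) * u ^ T)) := by
  have hr0 : 1 - r ≠ 0 := sub_ne_zero.2 fun h ↦ by simp [← h] at hr1
  have hu0 : 1 - u ≠ 0 := sub_ne_zero.2 hu1.symm
  induction T with
  | zero =>
    have hw0 : 1 - ε * w ≠ 0 := sub_ne_zero.2 hw1.symm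
    have hε2 : ε ^ 2 = 1 := by
      rw [← ZMod.intCast_zmod_eq_zero_iff_dvd] at hΔ hb
      rw [hε, ← Int.cast_pow, quadraticChar_sq_one (mul_ne_zero hΔ hb), Int.cast_one]
    have hcoeff : 1 - (u - ε * w) / (1 - ε * w) = (1 - u) / (1 - ε * w) := by
      rw [one_sub_div hw0]
      ring
    rw [mul_zero, pow_zero, one_mul, pow_zero, mul_one, hcoeff]
    convert hasSum_solutionCount_splitOddForm_of_not_dvd hp2 hΔ hb hε hr hw hr1 using 1
    have hfactor : 1 - w ^ 2 = (1 + ε * w) * (1 - ε * w) := by linear_combination w ^ 2 * hε2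
    rw [hfactor, div_mul_div_comm, div_eq_div_iff (mul_ne_zero (mul_ne_zero hr0 hu0) hw0) hr0]
    ring
  | succ T ih =>
    rw [show (p : ℤ) ^ (2 * (T + 1)) * b = p ^ 2 * (p ^ (2 * T) * b) by ring]
    convert hasSum_solutionCount_splitOddForm_sq_mul hp2 hΔ hr hw hu hr1 ih using 1
    generalize (u - ε * w) / (1 - ε * w) = c
    field_simp
    ring

end SplitFormSeries

section Coordinates

theorem two_mul_add_one_lt {k : ℕ} (i : Fin k) : 2 * (i : ℕ) + 1 < 2 * k + 1 := by lia

theorem two_mul_add_two_lt {k : ℕ} (i : Fin k) : 2 * (i : ℕ) + 2 < 2 * k + 1 := by lia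

/-- The position of each coordinate of `splitOddForm (Fin k) Δ` in the list
`x, y 0, z 0, …, y (k - 1), z (k - 1)`. -/
def splitOddIndex (k : ℕ) : Unit ⊕ Fin k ⊕ Fin k → Fin (2 * k + 1) :=
  Sum.elim (fun _ ↦ 0) <|
    Sum.elim (fun i ↦ ⟨2 * i + 1, two_mul_add_one_lt i⟩) fun i ↦ ⟨2 * i + 2, two_mul_add_two_lt i⟩

theorem splitOddIndex_bijective (k : ℕ) : Function.Bijective (splitOddIndex k) := by
  have hcard : Fintype.card (Unit ⊕ Fin k ⊕ Fin k) = Fintype.card (Fin (2 * k + 1)) := by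
    simp only [Fintype.card_sum, Fintype.card_unit, Fintype.card_fin]
    ring
  refine (Fintype.bijective_iff_injective_and_card _).2 ⟨?_, hcard⟩
  rintro (_ | i | i) (_ | j | j) h <;>
    simp only [splitOddIndex, Sum.elim_inl, Sum.elim_inr, Fin.ext_iff, Fin.val_zero] at h <;>
    first | rfl | lia | simp only [Sum.inl.injEq, Sum.inr.injEq, Fin.ext_iff]; lia

theorem card_eq_solutionCount_splitOddForm (k : ℕ) (Δ a : ℤ) (m : ℕ) :
    Nat.card {v : Fin (2 * k + 1) → ZMod m //
      (Δ : ZMod m) * v 0 ^ 2 +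
        ∑ i : Fin k, v ⟨2 * i + 1, two_mul_add_one_lt i⟩ * v ⟨2 * i + 2, two_mul_add_two_lt i⟩
        = a} =
      solutionCount (splitOddForm (Fin k) Δ) a m := by
  let e := Equiv.ofBijective _ (splitOddIndex_bijective k)
  refine Nat.card_congr ((Equiv.arrowCongr e.symm (.refl _)).subtypeEquiv fun v ↦ ?_)
  rw [splitOddForm_map, dotProduct_splitOddForm_mulVec]
  rfl

end Coordinates

open Classical in
theorem stmt_14_general {𝕜 : Type*} [RCLike 𝕜] (p : ℕ) (hp : p.Prime) (hp2 : p ≠ 2) (Δ : ℤ)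
    (hΔ : ¬ (p : ℤ) ∣ Δ) (ε : 𝕜) (hε : ε = if IsSquare (Δ : ZMod p) then 1 else -1) (k : ℕ)
    (t : ℤ) (ht : t ≠ 0) (T : ℕ) (hT : padicValInt p t = T) (z w u : 𝕜) (hz : ‖z‖ < p)
    (hw : w = z / p ^ (k + 1)) (hu : u = z ^ 2 / p ^ (2 * k + 1)) (hu1 : u ≠ 1) :
    HasSum
      (fun ℓ : ℕ => z ^ ℓ *
        ((Nat.card {v : Fin (2 * k + 1) → ZMod (p ^ ℓ) //
            (Δ : ZMod (p ^ ℓ)) * v 0 ^ 2 +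
              ∑ i : Fin k, v ⟨2 * i + 1, two_mul_add_one_lt i⟩ * v ⟨2 * i + 2, two_mul_add_two_lt i⟩
              = (t : ZMod (p ^ ℓ)) ^ 2} : 𝕜) / p ^ ((2 * k + 1) * ℓ)))
      (((1 - w ^ 2) / ((1 - z / p) * (1 - u))) *
        (1 - ((u - ε * w) / (1 - ε * w)) * u ^ T)) := by
  have := Fact.mk hp
  have hp1 : (1 : ℝ) ≤ p := by exact_mod_cast hp.one_le
  have hp0 : (p : 𝕜) ≠ 0 := Nat.cast_ne_zero.2 hp.ne_zero
  obtain ⟨s, hts, hs⟩ := exists_eq_pow_padicValInt_mul hp.ne_one ht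
  have hs2 : ¬ (p : ℤ) ∣ s ^ 2 := fun h ↦ hs ((Nat.prime_iff_prime_int.1 hp).dvd_of_dvd_pow h)
  have hchar : ε = (quadraticChar (ZMod p) (Δ * (s ^ 2 : ℤ)) : ℤ) := by
    rw [← ZMod.intCast_zmod_eq_zero_iff_dvd] at hΔ hs
    rw [Int.cast_pow, quadraticChar_mul_sq hΔ hs, hε]
    split_ifs <;> simp
  have hεw : ‖ε * w‖ < 1 := by
    have hε1 : ‖ε‖ = 1 := by rw [hε]; split_ifs <;> simp
    rw [norm_mul, hε1, one_mul, hw, norm_div, norm_pow, RCLike.norm_natCast,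
      div_lt_one (by positivity)]
    exact hz.trans_le (le_self_pow₀ hp1 k.succ_ne_zero)
  have hr : ‖z / (p : 𝕜)‖ < 1 := by
    rwa [norm_div, RCLike.norm_natCast, div_lt_one (by positivity)]
  have hterm (ℓ : ℕ) (N : 𝕜) :
      z ^ ℓ * (N / p ^ ((2 * k + 1) * ℓ)) = N * (z / p ^ (2 * k + 1)) ^ ℓ := by
    rw [div_pow, ← pow_mul]
    ring
  have hsq (ℓ : ℕ) : (t : ZMod (p ^ ℓ)) ^ 2 = (p ^ (2 * T) * s ^ 2 : ℤ) := by
    rw [hts, hT]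
    push_cast
    ring
  simp only [hterm, hsq, card_eq_solutionCount_splitOddForm]
  refine hasSum_solutionCount_splitOddForm hp2 hΔ hs2 hchar ?_ ?_ ?_ hr hu1
    (fun h ↦ by simp [h] at hεw) T
  · rw [Fintype.card_fin]
    field_simp
    ring
  · rw [Fintype.card_fin, hw]
    field_simp
    ring
  · rw [Fintype.card_fin, hu]
    field_simp

open Classical in
theorem stmt_14 (p : ℕ) (hp : p.Prime) (hp2 : p ≠ 2) (Δ : ℤ) (hΔ : ¬ (p : ℤ) ∣ Δ)
    (ε : ℝ) (hε : ε = if IsSquare (Δ : ZMod p) then 1 else -1) (k : ℕ)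
    (t : ℤ) (ht : t ≠ 0) (T : ℕ) (hT : padicValInt p t = T)
    (z : ℝ) (hz : |z| < 1)
    (w u : ℝ) (hw : w = z / p ^ (k + 1)) (hu : u = z ^ 2 / p ^ (2 * k + 1)) :
    HasSum
      (fun ℓ : ℕ => z ^ ℓ *
        ((Nat.card {v : Fin (2 * k + 1) → ZMod (p ^ ℓ) //
            (Δ : ZMod (p ^ ℓ)) * v ⟨0, by omega⟩ ^ 2 +
              ∑ i : Fin k, v ⟨2 * i + 1, by have := i.isLt; omega⟩ *
                v ⟨2 * i + 2, by have := i.isLt; omega⟩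
              = (t : ZMod (p ^ ℓ)) ^ 2} : ℝ) / p ^ ((2 * k + 1) * ℓ)))
      (((1 - w ^ 2) / ((1 - z / p) * (1 - u))) *
        (1 - ((u - ε * w) / (1 - ε * w)) * u ^ T)) := by
  have hp1 : (1 : ℝ) ≤ p := by exact_mod_cast hp.one_le
  have hu1 : u < 1 := by
    rw [hu, div_lt_one (by positivity)]
    exact ((sq_lt_one_iff_abs_lt_one z).2 hz).trans_le (one_le_pow₀ hp1)
  exact stmt_14_general p hp hp2 Δ hΔ ε hε k t ht T hT z w u (hz.trans_le hp1) hw hu hu1.ne
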